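/- Refinement monotonicity of synergy. Let A be a finite index set, let (X_a)_{a∈A} be finite-valued random variables that are mutually independent, and let Y be a finite-valued random variable on the same probability space. If P and P' are partitions of A and P' refines P (every block of P' is contained in a block of P), then Syn_P(X_A → Y) ≤ Syn_{P'}(X_A → Y), where for a partition Q = {N₁,…,N_r} of A, Syn_Q(X_A → Y) := I(X_A; Y) − Σ_{j=1}^r I(X_{N_j}; Y). -/

import Mathlib

open MeasureTheory Finset

/-- Probability that the random variable `X` takes the value `s` under `μ`. -/
noncomputable def pr {Ω : Type*} [MeasurableSpace Ω] (μ : Measure Ω)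
    {S : Type*} (X : Ω → S) (s : S) : ℝ :=
  (μ {ω | X ω = s}).toReal

/-- Shannon entropy (natural log) of a finite-valued random variable. -/
noncomputable def finEntropy {Ω : Type*} [MeasurableSpace Ω] (μ : Measure Ω)
    {S : Type*} [Fintype S] (X : Ω → S) : ℝ :=
  -∑ s : S, pr μ X s * Real.log (pr μ X s)

/-- Mutual information `I(X;Y) = H(X) + H(Y) - H((X,Y))`. -/
noncomputable def mutInfo {Ω : Type*} [MeasurableSpace Ω] (μ : Measure Ω)
    {S T : Type*} [Fintype S] [Fintype T] (X : Ω → S) (Y : Ω → T) : ℝ :=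
  finEntropy μ X + finEntropy μ Y - finEntropy μ (fun ω => (X ω, Y ω))


/-- `P` is a partition of the finite index set `A`: its blocks are nonempty subsets of `A`,
pairwise disjoint, and they cover `A`. -/
def IsFinsetPartition {ι : Type*} (A : Finset ι) (P : Finset (Finset ι)) : Prop :=
  (∀ B ∈ P, B.Nonempty) ∧ (∀ B ∈ P, B ⊆ A) ∧
    (∀ B ∈ P, ∀ C ∈ P, B ≠ C → Disjoint B C) ∧ (∀ a ∈ A, ∃ B ∈ P, a ∈ B)

/-- The tuple `X_B = (X_a)_{a ∈ B}` of a family of random variables over a finite index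
subset `B`, viewed as a single random variable valued in the product type. -/
def tupleOn {Ω : Type*} {ι : Type*} {S : ι → Type*} (X : ∀ a, Ω → S a) (B : Finset ι) :
    Ω → ∀ a : B, S a :=
  fun ω a => X a ω

/-- The synergy of `X_A` with respect to `Y` relative to a partition `Q = {N₁,…,N_r}` of `A`:
`Syn_Q(X_A → Y) := I(X_A;Y) − Σ_j I(X_{N_j};Y)`. -/
noncomputable def synPart {Ω : Type*} [MeasurableSpace Ω] (μ : Measure Ω)
    {ι : Type*} [DecidableEq ι] {S : ι → Type*} [∀ a, Fintype (S a)]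
    {T : Type*} [Fintype T]
    (X : ∀ a, Ω → S a) (A : Finset ι) (Q : Finset (Finset ι)) (Y : Ω → T) : ℝ :=
  mutInfo μ (tupleOn X A) Y - ∑ B ∈ Q, mutInfo μ (tupleOn X B) Y

/-! Put `F B = I(X_B; Y)`. For independent `X`, `X'` one has
`I((X, X'); Y) - I(X; Y) - I(X'; Y) = I(X; X' | Y) - I(X; X') = I(X; X' | Y) ≥ 0`, so `F` is
superadditive over disjoint sets of sources. The blocks of `P'` lying inside a block `C` of `P`
partition `C` and hence contribute at most `F C`; summing over `C` gives `∑_{P'} F ≤ ∑_P F`.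

Conditioning on `Y = t` is done by restricting `μ` to that fibre without normalising: nonnegativity
of `I(X; X' | Y)` is then the sum over `t` of the subadditivity of entropy for finite measures. -/

open ProbabilityTheory
open Real (log negMulLog)

section Superadditive

variable {α M : Type*}

/-- Superadditivity over disjoint joins, used for set functions on `Finset ι`. The condition at `⊥`
is the case of the empty join. -/
structure Superadditive [SemilatticeSup α] [OrderBot α] [Add M] [Zero M] [LE M] (F : α → M) :
    Prop where
  nonneg_bot : 0 ≤ F ⊥
  add_le_sup : ∀ ⦃a b⦄, Disjoint a b → F a + F b ≤ F (a ⊔ b)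

theorem Superadditive.sum_le_sup [DistribLattice α] [OrderBot α] [AddCommMonoid M]
    [PartialOrder M] [IsOrderedAddMonoid M] {F : α → M} (hF : Superadditive F) {κ : Type*}
    {s : Finset κ} {a : κ → α} (ha : (s : Set κ).PairwiseDisjoint a) :
    ∑ i ∈ s, F (a i) ≤ F (s.sup a) := by
  classical
  induction s using Finset.induction_on with
  | empty => simpa using hF.nonneg_bot
  | insert i s hi ih =>
    rw [coe_insert, Set.pairwiseDisjoint_insert_of_notMem (mem_coe.not.2 hi)] at ha
    have hdisj : Disjoint (a i) (s.sup a) := Finset.disjoint_sup_right.2 fun j hj => ha.2 j hj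
    calc ∑ j ∈ insert i s, F (a j) = F (a i) + ∑ j ∈ s, F (a j) := sum_insert hi
      _ ≤ F (a i) + F (s.sup a) := by gcongr; exact ih ha.1
      _ ≤ F (a i ⊔ s.sup a) := hF.add_le_sup hdisj
      _ = F ((insert i s).sup a) := by rw [sup_insert]

end Superadditive

namespace IsFinsetPartition

variable {ι : Type*} {A : Finset ι} {P P' : Finset (Finset ι)}

theorem pairwiseDisjoint (hP : IsFinsetPartition A P) :
    (P : Set (Finset ι)).PairwiseDisjoint id :=
  fun B hB C hC => hP.2.2.1 B hB C hC

theorem eq_of_mem_of_mem (hP : IsFinsetPartition A P) {B C : Finset ι} (hB : B ∈ P) (hC : C ∈ P)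
    {a : ι} (haB : a ∈ B) (haC : a ∈ C) : B = C :=
  hP.pairwiseDisjoint.elim_finset hB hC a haB haC

variable [DecidableEq ι]

theorem sup_filter_eq (hP : IsFinsetPartition A P) (hP' : IsFinsetPartition A P')
    {g : Finset ι → Finset ι} (hgP : ∀ B ∈ P', g B ∈ P) (hg : ∀ B ∈ P', B ⊆ g B)
    {C : Finset ι} (hC : C ∈ P) : {B ∈ P' | g B = C}.sup id = C := by
  ext a
  simp only [mem_sup, mem_filter, id]
  constructor
  · rintro ⟨B, ⟨hB, rfl⟩, haB⟩
    exact hg B hB haB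
  · intro haC
    obtain ⟨B, hB, haB⟩ := hP'.2.2.2 a (hP.2.1 C hC haC)
    exact ⟨B, ⟨hB, hP.eq_of_mem_of_mem (hgP B hB) hC (hg B hB haB) haC⟩, haB⟩

theorem sum_le_sum_of_refines {M : Type*} [AddCommMonoid M] [PartialOrder M]
    [IsOrderedAddMonoid M] (hP : IsFinsetPartition A P) (hP' : IsFinsetPartition A P')
    (hrefine : ∀ B ∈ P', ∃ C ∈ P, B ⊆ C) {F : Finset ι → M} (hF : Superadditive F) :
    ∑ B ∈ P', F B ≤ ∑ C ∈ P, F C := by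
  choose! g hgP hg using hrefine
  calc ∑ B ∈ P', F B = ∑ C ∈ P, ∑ B ∈ P' with g B = C, F B :=
        (sum_fiberwise_of_maps_to hgP F).symm
    _ ≤ ∑ C ∈ P, F ({B ∈ P' | g B = C}.sup id) := sum_le_sum fun C _ =>
        hF.sum_le_sup (hP'.pairwiseDisjoint.subset (coe_subset.2 (filter_subset _ P')))
    _ = ∑ C ∈ P, F C := sum_congr rfl fun C hC => by rw [hP.sup_filter_eq hP' hgP hg hC]

end IsFinsetPartition

section NegMulLog

theorem negMulLog_add_mul_log_le_sub {x y : ℝ} (hx : 0 ≤ x) (hy : 0 < y) :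
    negMulLog x + x * log y ≤ y - x := by
  have hscale : negMulLog x + x * log y = y * negMulLog (x / y) := by
    conv_lhs => rw [← div_mul_cancel₀ x hy.ne', Real.negMulLog_mul]
    simp only [negMulLog]
    ring
  calc negMulLog x + x * log y = y * negMulLog (x / y) := hscale
    _ ≤ y * (1 - x / y) := by gcongr; exact Real.negMulLog_le_one_sub_self (by positivity)
    _ = y - x := by field_simp

theorem negMulLog_add_mul_log_le_mul_div_sub {x a b c : ℝ} (hx : 0 ≤ x) (hxa : x ≤ a)
    (hxb : x ≤ b) (hxc : x ≤ c) :
    negMulLog x + x * (log a + log b - log c) ≤ a * b / c - x := by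
  rcases hx.eq_or_lt with rfl | hpos
  · simp only [Real.negMulLog_zero, zero_mul, add_zero, sub_zero]
    positivity
  · have ha : 0 < a := hpos.trans_le hxa
    have hb : 0 < b := hpos.trans_le hxb
    have hc : 0 < c := hpos.trans_le hxc
    rw [← Real.log_mul ha.ne' hb.ne', ← Real.log_div (mul_pos ha hb).ne' hc.ne']
    exact negMulLog_add_mul_log_le_sub hx (by positivity)

theorem sum_negMulLog_add_negMulLog_sum_le {S T : Type*} [Fintype S] [Fintype T] {p : S → T → ℝ}
    (hp : ∀ s t, 0 ≤ p s t) :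
    ∑ s, ∑ t, negMulLog (p s t) + negMulLog (∑ s, ∑ t, p s t) ≤
      ∑ s, negMulLog (∑ t, p s t) + ∑ t, negMulLog (∑ s, p s t) := by
  set a : S → ℝ := fun s => ∑ t, p s t with ha
  set b : T → ℝ := fun t => ∑ s, p s t with hb
  set c : ℝ := ∑ s, a s with hc
  have hbc : ∑ t, b t = c := sum_comm
  have hpa s t : p s t ≤ a s := single_le_sum (fun t _ => hp s t) (mem_univ t)
  have hpb s t : p s t ≤ b t := single_le_sum (fun s _ => hp s t) (mem_univ s)
  have hac s : a s ≤ c := single_le_sum (fun s _ => sum_nonneg fun t _ => hp s t) (mem_univ s)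
  -- Gibbs' inequality, comparing `p` with the product of its marginals rescaled to total mass `c`.
  have gibbs s t : negMulLog (p s t) + p s t * (log (a s) + log (b t) - log c) ≤
      a s * b t / c - p s t :=
    negMulLog_add_mul_log_le_mul_div_sub (hp s t) (hpa s t) (hpb s t) ((hpa s t).trans (hac s))
  have sum_log_a : ∑ s, ∑ t, p s t * log (a s) = -∑ s, negMulLog (a s) := by
    simp [negMulLog, ← sum_mul, ha]
  have sum_log_b : ∑ s, ∑ t, p s t * log (b t) = -∑ t, negMulLog (b t) := by
    rw [sum_comm]
    simp [negMulLog, ← sum_mul, hb]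
  have sum_log_c : ∑ s, ∑ t, p s t * log c = -negMulLog c := by
    simp [negMulLog, ← sum_mul, hc, ha]
  have sum_prod : ∑ s, ∑ t, a s * b t / c = c := by
    simp only [← sum_div, ← mul_sum, ← sum_mul, hbc]
    exact mul_self_div_self c
  have total := sum_le_sum fun s (_ : s ∈ univ) => sum_le_sum fun t (_ : t ∈ univ) => gibbs s t
  simp only [mul_add, mul_sub, sum_add_distrib, sum_sub_distrib, sum_log_a, sum_log_b, sum_log_c,
    sum_prod] at total
  linarith

end NegMulLog

section Entropy

variable {Ω : Type*} [MeasurableSpace Ω] {μ : Measure Ω} {S T U : Type*}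

theorem pr_eq_measureReal_preimage (X : Ω → S) (s : S) : pr μ X s = μ.real (X ⁻¹' {s}) := rfl

theorem pr_nonneg (X : Ω → S) (s : S) : 0 ≤ pr μ X s := ENNReal.toReal_nonneg

theorem pr_comp_of_injective (X : Ω → S) {g : S → T} (hg : g.Injective) (s : S) :
    pr μ (fun ω => g (X ω)) (g s) = pr μ X s := by
  simp only [pr, hg.eq_iff]

theorem finEntropy_eq_sum_negMulLog [Fintype S] (X : Ω → S) :
    finEntropy μ X = ∑ s, negMulLog (pr μ X s) := by
  simp [finEntropy, negMulLog]

theorem finEntropy_equiv_comp [Fintype S] [Fintype T] (e : S ≃ T) (X : Ω → S) :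
    finEntropy μ (fun ω => e (X ω)) = finEntropy μ X := by
  simp only [finEntropy, ← e.sum_comp, pr_comp_of_injective X e.injective]

variable [MeasurableSpace S] [MeasurableSingletonClass S] {X : Ω → S}

theorem sum_pr [IsFiniteMeasure μ] [Fintype S] (hX : Measurable X) :
    ∑ s, pr μ X s = μ.real Set.univ := by
  simpa [pr_eq_measureReal_preimage] using sum_measureReal_preimage_singleton (μ := μ) univ
    fun s _ => hX (measurableSet_singleton s)

theorem pr_prodMk_eq_pr_restrict (hX : Measurable X) (Z : Ω → U) (s : S) (u : U) :
    pr μ (fun ω => (X ω, Z ω)) (s, u) = pr (μ.restrict (Z ⁻¹' {u})) X s := by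
  rw [pr_eq_measureReal_preimage, pr_eq_measureReal_preimage,
    measureReal_restrict_apply (hX (measurableSet_singleton s)), ← Set.mk_preimage_prod,
    Set.singleton_prod_singleton]

theorem sum_pr_prodMk_left [IsFiniteMeasure μ] [Fintype S] (hX : Measurable X) (Z : Ω → U)
    (u : U) : ∑ s, pr μ (fun ω => (X ω, Z ω)) (s, u) = pr μ Z u := by
  simp only [pr_prodMk_eq_pr_restrict hX, sum_pr hX, measureReal_restrict_apply_univ,
    pr_eq_measureReal_preimage Z]

theorem sum_pr_prodMk_right [IsFiniteMeasure μ] [Fintype S] (hX : Measurable X) (Z : Ω → U)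
    (u : U) : ∑ s, pr μ (fun ω => (Z ω, X ω)) (u, s) = pr μ Z u := by
  rw [← sum_pr_prodMk_left hX Z u]
  exact sum_congr rfl fun s _ =>
    pr_comp_of_injective (fun ω => (X ω, Z ω)) Prod.swap_injective (s, u)

theorem finEntropy_prodMk_eq_sum_restrict [Fintype S] [Fintype U] (hX : Measurable X)
    (Z : Ω → U) :
    finEntropy μ (fun ω => (X ω, Z ω)) = ∑ u, finEntropy (μ.restrict (Z ⁻¹' {u})) X := by
  simp only [finEntropy_eq_sum_negMulLog, Fintype.sum_prod_type_right,
    pr_prodMk_eq_pr_restrict hX]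

variable [MeasurableSpace T] [MeasurableSingletonClass T] [Fintype S] [Fintype T] {Y : Ω → T}

theorem finEntropy_prodMk_of_indepFun [IsProbabilityMeasure μ] (hX : Measurable X)
    (hY : Measurable Y) (h : IndepFun X Y μ) :
    finEntropy μ (fun ω => (X ω, Y ω)) = finEntropy μ X + finEntropy μ Y := by
  have pr_mul s t : pr μ (fun ω => (X ω, Y ω)) (s, t) = pr μ X s * pr μ Y t := by
    simp only [pr_eq_measureReal_preimage, measureReal_def, ← ENNReal.toReal_mul]
    rw [← h.measure_inter_preimage_eq_mul _ _ (measurableSet_singleton s)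
      (measurableSet_singleton t), ← Set.mk_preimage_prod, Set.singleton_prod_singleton]
  simp only [finEntropy_eq_sum_negMulLog, Fintype.sum_prod_type, pr_mul, Real.negMulLog_mul,
    sum_add_distrib, ← mul_sum, ← sum_mul, sum_pr hX, sum_pr hY, probReal_univ, one_mul]

theorem finEntropy_prodMk_add_negMulLog_le [IsFiniteMeasure μ] (hX : Measurable X)
    (hY : Measurable Y) :
    finEntropy μ (fun ω => (X ω, Y ω)) + negMulLog (μ.real Set.univ) ≤
      finEntropy μ X + finEntropy μ Y := by
  have h := sum_negMulLog_add_negMulLog_sum_le fun s t =>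
    pr_nonneg (μ := μ) (fun ω => (X ω, Y ω)) (s, t)
  simpa only [finEntropy_eq_sum_negMulLog, Fintype.sum_prod_type, sum_pr_prodMk_left hX,
    sum_pr_prodMk_right hY, sum_pr hX] using h

theorem finEntropy_submodular [IsFiniteMeasure μ] [Fintype U] (hX : Measurable X)
    (hY : Measurable Y) (Z : Ω → U) :
    finEntropy μ (fun ω => ((X ω, Y ω), Z ω)) + finEntropy μ Z ≤
      finEntropy μ (fun ω => (X ω, Z ω)) + finEntropy μ (fun ω => (Y ω, Z ω)) := by
  have hZ : finEntropy μ Z = ∑ u, negMulLog ((μ.restrict (Z ⁻¹' {u})).real Set.univ) := by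
    simp only [finEntropy_eq_sum_negMulLog, measureReal_restrict_apply_univ,
      pr_eq_measureReal_preimage]
  rw [hZ, finEntropy_prodMk_eq_sum_restrict (hX.prodMk hY),
    finEntropy_prodMk_eq_sum_restrict hX, finEntropy_prodMk_eq_sum_restrict hY,
    ← sum_add_distrib, ← sum_add_distrib]
  exact sum_le_sum fun u _ => finEntropy_prodMk_add_negMulLog_le hX hY

theorem mutInfo_add_mutInfo_le_of_indepFun [IsProbabilityMeasure μ] [Fintype U]
    (hX : Measurable X) (hY : Measurable Y) (h : IndepFun X Y μ) (Z : Ω → U) :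
    mutInfo μ X Z + mutInfo μ Y Z ≤ mutInfo μ (fun ω => (X ω, Y ω)) Z := by
  have hadd := finEntropy_prodMk_of_indepFun hX hY h
  have hsub := finEntropy_submodular (μ := μ) hX hY Z
  unfold mutInfo
  linarith

end Entropy

section MutualInformation

variable {Ω : Type*} [MeasurableSpace Ω] {μ : Measure Ω} {S T U : Type*} [Fintype S] [Fintype U]

theorem mutInfo_equiv_comp [Fintype T] (e : S ≃ T) (X : Ω → S) (Z : Ω → U) :
    mutInfo μ (fun ω => e (X ω)) Z = mutInfo μ X Z := by
  have hpair := finEntropy_equiv_comp (μ := μ) (e.prodCongr (.refl U)) fun ω => (X ω, Z ω)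
  unfold mutInfo
  rw [finEntropy_equiv_comp e X, ← hpair]
  rfl

theorem mutInfo_of_unique [IsProbabilityMeasure μ] [Unique S] (X : Ω → S) (Z : Ω → U) :
    mutInfo μ X Z = 0 := by
  have hX : finEntropy μ X = 0 := by simp [finEntropy, pr, Subsingleton.elim _ (default : S)]
  have hpair := finEntropy_equiv_comp (μ := μ) (Equiv.uniqueProd U S) fun ω => (X ω, Z ω)
  unfold mutInfo
  rw [hX, ← hpair]
  simp

end MutualInformation

section Tuples

variable {Ω : Type*} [MeasurableSpace Ω] {μ : Measure Ω} {ι : Type*} {S : ι → Type*}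
  [∀ a, MeasurableSpace (S a)] {X : ∀ a, Ω → S a}

theorem measurable_tupleOn (hX : ∀ a, Measurable (X a)) (B : Finset ι) :
    Measurable (tupleOn X B) :=
  measurable_pi_lambda _ fun a => hX a

variable [∀ a, MeasurableSingletonClass (S a)]

theorem iIndepFun_of_pr_eq_prod [IsProbabilityMeasure μ] [Fintype ι] [∀ a, Countable (S a)]
    (hX : ∀ a, Measurable (X a))
    (hindep : ∀ f : ∀ a, S a, pr μ (fun ω a => X a ω) f = ∏ a, pr μ (X a) (f a)) :
    iIndepFun X μ := by
  rw [iIndepFun_iff_map_fun_eq_pi_map fun a => (hX a).aemeasurable]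
  have (a : ι) : IsProbabilityMeasure (μ.map (X a)) :=
    Measure.isProbabilityMeasure_map (hX a).aemeasurable
  refine Measure.ext_of_singleton fun f => ?_
  rw [Measure.pi_singleton, ← ENNReal.toReal_eq_toReal_iff' (measure_ne_top _ _)
    (ENNReal.prod_ne_top fun a _ => measure_ne_top _ _), ENNReal.toReal_prod,
    Measure.map_apply (measurable_pi_lambda _ hX) (measurableSet_singleton f)]
  simp only [Measure.map_apply (hX _) (measurableSet_singleton _)]
  exact hindep f

variable [∀ a, Fintype (S a)] {T : Type*} [Fintype T]

theorem superadditive_mutInfo_tupleOn [DecidableEq ι] (hX : ∀ a, Measurable (X a))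
    (hindep : iIndepFun X μ) (Y : Ω → T) :
    Superadditive fun B : Finset ι => mutInfo μ (tupleOn X B) Y := by
  have := hindep.isProbabilityMeasure
  constructor
  · exact (mutInfo_of_unique (tupleOn X ∅) Y).ge
  · intro B C hBC
    let e := Equiv.piFinsetUnion S hBC
    calc mutInfo μ (tupleOn X B) Y + mutInfo μ (tupleOn X C) Y
        ≤ mutInfo μ (fun ω => (tupleOn X B ω, tupleOn X C ω)) Y :=
          mutInfo_add_mutInfo_le_of_indepFun (measurable_tupleOn hX B) (measurable_tupleOn hX C)
            (hindep.indepFun_finset B C hBC hX) Y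
      _ = mutInfo μ (tupleOn X (B ∪ C)) Y :=
          mutInfo_equiv_comp e.symm (tupleOn X (B ∪ C)) Y

theorem synergy_monotone_under_refinement_general [DecidableEq ι] (hX : ∀ a, Measurable (X a))
    (Y : Ω → T) (hindep : iIndepFun X μ) {A : Finset ι} {P P' : Finset (Finset ι)}
    (hP : IsFinsetPartition A P) (hP' : IsFinsetPartition A P')
    (hrefine : ∀ B ∈ P', ∃ C ∈ P, B ⊆ C) :
    synPart μ X A P Y ≤ synPart μ X A P' Y :=
  sub_le_sub_left
    (hP.sum_le_sum_of_refines hP' hrefine (superadditive_mutInfo_tupleOn hX hindep Y)) _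

end Tuples

/-- Refinement monotonicity of synergy.
For mutually independent finite-valued sources `(X_a)_{a ∈ A}` and a finite-valued target
`Y`, if the partition `P'` of `A` refines the partition `P` (every block of `P'` is
contained in a block of `P`), then `Syn_P(X_A → Y) ≤ Syn_{P'}(X_A → Y)`. -/
theorem synergy_monotone_under_refinement
    {Ω : Type*} [MeasurableSpace Ω] (μ : Measure Ω) [IsProbabilityMeasure μ]
    {ι : Type*} [Fintype ι] [DecidableEq ι]
    {S : ι → Type*} [∀ a, Fintype (S a)]
    [∀ a, MeasurableSpace (S a)] [∀ a, MeasurableSingletonClass (S a)]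
    {T : Type*} [Fintype T] [MeasurableSpace T] [MeasurableSingletonClass T]
    (X : ∀ a, Ω → S a) (Y : Ω → T)
    (hX : ∀ a, Measurable (X a)) (hY : Measurable Y)
    (hindep : ∀ f : ∀ a, S a,
      pr μ (fun ω a => X a ω) f = ∏ a, pr μ (X a) (f a))
    (P P' : Finset (Finset ι))
    (hP : IsFinsetPartition Finset.univ P) (hP' : IsFinsetPartition Finset.univ P')
    (hrefine : ∀ B ∈ P', ∃ C ∈ P, B ⊆ C) :
    synPart μ X Finset.univ P Y ≤ synPart μ X Finset.univ P' Y :=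
  synergy_monotone_under_refinement_general hX Y (iIndepFun_of_pr_eq_prod hX hindep) hP hP' hrefine
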